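/- Let μ⋆, μₙ ∈ ℝ and λ⋆, κₙ, αₙ, βₙ > 0. Then ∫ KL(N(μ⋆, 1/λ⋆) ‖ N(μ, 1/λ)) dNG(μₙ, κₙ, αₙ, βₙ)(μ, λ) = (1/2)·( log(λ⋆ βₙ) − ψ(αₙ) + (αₙ/βₙ)·(1/λ⋆ + (μ⋆ − μₙ)²) − 1 + 1/κₙ ), where ψ is the digamma function. -/

import Mathlib

open MeasureTheory ProbabilityTheory Real
open scoped ENNReal NNReal Classical

/-- Kullback-Leibler divergence: `∫ log (dQ/dP) dQ` when `Q ≪ P` and the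
log-likelihood ratio is integrable, `+∞` otherwise. -/
noncomputable def klDiv {Ω : Type*} [MeasurableSpace Ω] (Q P : Measure Ω) : ℝ≥0∞ :=
  if Q ≪ P ∧ Integrable (fun x => Real.log (Q.rnDeriv P x).toReal) Q
  then ENNReal.ofReal (∫ x, Real.log (Q.rnDeriv P x).toReal ∂Q)
  else ⊤

/-- The digamma function: derivative of `log ∘ Γ`. -/
noncomputable def digamma (x : ℝ) : ℝ := deriv (fun y => Real.log (Real.Gamma y)) x

/-- Joint density of the normal-gamma distribution `NG(m, κ, α, β)` at `p = (μ, λ)`: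
`N(μ | m, (κλ)⁻¹) · Gamma(λ | α, β)`. -/
noncomputable def normalGammaPDFReal (m κ α β : ℝ) (p : ℝ × ℝ) : ℝ :=
  gaussianPDFReal m (Real.toNNReal (κ * p.2)⁻¹) p.1 * gammaPDFReal α β p.2

/-- The normal-gamma distribution `NG(m, κ, α, β)` as a measure on `ℝ × ℝ`
(supported on `ℝ × (0, ∞)`). -/
noncomputable def normalGamma (m κ α β : ℝ) : Measure (ℝ × ℝ) :=
  MeasureTheory.volume.withDensity (fun p => ENNReal.ofReal (normalGammaPDFReal m κ α β p))

/-!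
The divergence between two Gaussians is quadratic in the mean of the second one, so averaging over
`μ ∼ N(μₙ, 1/(κₙλ))` only adds half the ratio of the variance `1/(κₙλ)` to `1/λ`, that is
`1/(2κₙ)`. What remains is affine in `λ` and `log λ`. Since `λ ^ t` times the `Gamma(α, β)` density
is a multiple of the `Gamma(α + t, β)` density, `t ↦ log Γ(α + t) - log Γ(α) - t log β` is the
cumulant generating function of `log λ`; its derivative at `0` gives `E[log λ] = ψ(α) - log β`.
-/

section Moments

variable {Ω : Type*} [MeasurableSpace Ω] {μ : Measure Ω} {X : Ω → ℝ}

lemma integral_sub_const_sq [IsProbabilityMeasure μ] (hX : MemLp X 2 μ) (a : ℝ) :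
    ∫ ω, (X ω - a) ^ 2 ∂μ = Var[X; μ] + (μ[X] - a) ^ 2 := by
  have hmean : ∫ ω, (X ω - a) ∂μ = μ[X] - a := by
    rw [integral_sub (hX.integrable one_le_two) (integrable_const a)]
    simp
  have hvar : Var[fun ω ↦ X ω - a; μ] = ∫ ω, (X ω - a) ^ 2 ∂μ - (∫ ω, (X ω - a) ∂μ) ^ 2 :=
    variance_eq_sub (hX.sub (memLp_const a))
  rw [variance_sub_const hX.aestronglyMeasurable, hmean] at hvar
  linarith

lemma coe_lintegral_ofReal_eq_coe_integral {f : Ω → ℝ} (hfi : Integrable f μ) (hf : 0 ≤ᵐ[μ] f) :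
    ((∫⁻ ω, ENNReal.ofReal (f ω) ∂μ : ℝ≥0∞) : EReal) = ((∫ ω, f ω ∂μ : ℝ) : EReal) := by
  rw [← ofReal_integral_eq_lintegral_ofReal hfi hf, EReal.coe_ennreal_ofReal,
    max_eq_left (integral_nonneg_of_ae hf)]

end Moments

section Gaussian

variable (m a : ℝ) (v : ℝ≥0)

lemma integrable_sub_const_sq_gaussianReal :
    Integrable (fun x ↦ (x - a) ^ 2) (gaussianReal m v) :=
  ((memLp_id_gaussianReal 2).sub (memLp_const a)).integrable_sq

lemma integral_sub_const_sq_gaussianReal :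
    ∫ x, (x - a) ^ 2 ∂gaussianReal m v = v + (m - a) ^ 2 := by
  simpa [variance_id_gaussianReal, integral_id_gaussianReal] using
    integral_sub_const_sq (memLp_id_gaussianReal (μ := m) (v := v) 2) a

variable {v}

lemma log_gaussianPDFReal (hv : v ≠ 0) (x : ℝ) :
    log (gaussianPDFReal m v x) = -(log (2 * π * v) + (x - m) ^ 2 / v) / 2 := by
  rw [gaussianPDFReal, log_mul (by positivity) (by positivity), log_exp, log_inv,
    log_sqrt (by positivity)]
  field_simp
  ring

variable {m₁ m₂ : ℝ} {v₁ v₂ : ℝ≥0}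

lemma gaussianReal_absolutelyContinuous_gaussianReal (hv₁ : v₁ ≠ 0) (hv₂ : v₂ ≠ 0) :
    gaussianReal m₁ v₁ ≪ gaussianReal m₂ v₂ :=
  (gaussianReal_absolutelyContinuous m₁ hv₁).trans (gaussianReal_absolutelyContinuous' m₂ hv₂)

lemma rnDeriv_gaussianReal_gaussianReal (hv₂ : v₂ ≠ 0) :
    (gaussianReal m₁ v₁).rnDeriv (gaussianReal m₂ v₂) =ᵐ[volume]
      fun x ↦ (gaussianPDF m₂ v₂ x)⁻¹ * gaussianPDF m₁ v₁ x := by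
  have hdensity := Measure.rnDeriv_withDensity_right (gaussianReal m₁ v₁) volume
    (measurable_gaussianPDF m₂ v₂).aemeasurable
    (ae_of_all _ fun x ↦ (gaussianPDF_pos m₂ hv₂ x).ne') (ae_of_all _ fun x ↦ gaussianPDF_ne_top)
  rw [← gaussianReal_of_var_ne_zero m₂ hv₂] at hdensity
  filter_upwards [hdensity, rnDeriv_gaussianReal m₁ v₁] with x hx hx₁
  rw [hx, hx₁]

lemma log_rnDeriv_gaussianReal_gaussianReal (hv₁ : v₁ ≠ 0) (hv₂ : v₂ ≠ 0) :
    (fun x ↦ log ((gaussianReal m₁ v₁).rnDeriv (gaussianReal m₂ v₂) x).toReal)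
      =ᵐ[gaussianReal m₁ v₁] fun x ↦
        (log (v₂ / v₁) + (x - m₂) ^ 2 / v₂ - (x - m₁) ^ 2 / v₁) / 2 := by
  filter_upwards [(gaussianReal_absolutelyContinuous m₁ hv₁).ae_le
    (rnDeriv_gaussianReal_gaussianReal hv₂)] with x hx
  rw [hx, ENNReal.toReal_mul, ENNReal.toReal_inv, toReal_gaussianPDF, toReal_gaussianPDF,
    log_mul (inv_ne_zero (gaussianPDFReal_pos _ _ _ hv₂).ne') (gaussianPDFReal_pos _ _ _ hv₁).ne',
    log_inv, log_gaussianPDFReal _ hv₁, log_gaussianPDFReal _ hv₂,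
    log_mul (by positivity) (NNReal.coe_ne_zero.2 hv₁),
    log_mul (by positivity) (NNReal.coe_ne_zero.2 hv₂),
    log_div (NNReal.coe_ne_zero.2 hv₂) (NNReal.coe_ne_zero.2 hv₁)]
  ring

end Gaussian

/-- The closed form of `KL(N(m₁, v₁) ‖ N(m₂, v₂))`. The variances are real numbers, so that `v₂`
can be written as the inverse of a precision. -/
noncomputable def gaussianKL (m₁ v₁ m₂ v₂ : ℝ) : ℝ :=
  (log (v₂ / v₁) + (v₁ + (m₁ - m₂) ^ 2) / v₂ - 1) / 2

section GaussianKL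

lemma gaussianKL_nonneg (m₁ m₂ : ℝ) {v₁ v₂ : ℝ} (hv₁ : 0 < v₁) (hv₂ : 0 < v₂) :
    0 ≤ gaussianKL m₁ v₁ m₂ v₂ := by
  have hlog : log (v₁ / v₂) ≤ v₁ / v₂ - 1 := log_le_sub_one_of_pos (by positivity)
  have hsq : 0 ≤ (m₁ - m₂) ^ 2 / v₂ := by positivity
  rw [gaussianKL, ← inv_div v₁ v₂, log_inv, add_div]
  linarith

lemma measurable_gaussianKL (m₁ v₁ : ℝ) :
    Measurable fun p : ℝ × ℝ ↦ gaussianKL m₁ v₁ p.1 p.2 := by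
  unfold gaussianKL
  fun_prop

theorem klDiv_gaussianReal (m₁ m₂ : ℝ) {v₁ v₂ : ℝ≥0} (hv₁ : v₁ ≠ 0) (hv₂ : v₂ ≠ 0) :
    klDiv (gaussianReal m₁ v₁) (gaussianReal m₂ v₂) =
      ENNReal.ofReal (gaussianKL m₁ v₁ m₂ v₂) := by
  have hlog := log_rnDeriv_gaussianReal_gaussianReal (m₁ := m₁) (m₂ := m₂) hv₁ hv₂
  have hint (a : ℝ) (v : ℝ≥0) : Integrable (fun x ↦ (x - a) ^ 2 / v) (gaussianReal m₁ v₁) :=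
    (integrable_sub_const_sq_gaussianReal m₁ a v₁).div_const v
  have hint₂ : Integrable (fun x ↦ log (v₂ / v₁) + (x - m₂) ^ 2 / v₂) (gaussianReal m₁ v₁) :=
    (integrable_const _).add (hint m₂ v₂)
  rw [klDiv, if_pos ⟨gaussianReal_absolutelyContinuous_gaussianReal hv₁ hv₂,
    (integrable_congr hlog).2 ((hint₂.sub (hint m₁ v₁)).div_const 2)⟩, integral_congr_ae hlog,
    integral_div, integral_sub hint₂ (hint m₁ v₁), integral_add (integrable_const _) (hint m₂ v₂),
    integral_div, integral_div, integral_sub_const_sq_gaussianReal,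
    integral_sub_const_sq_gaussianReal, integral_const, probReal_univ, one_smul, sub_self,
    zero_pow two_ne_zero, add_zero, div_self (by positivity), gaussianKL]

variable (m₁ v₁ m : ℝ) (v : ℝ≥0) (v₂ : ℝ)

lemma gaussianKL_eq_add_sub_sq (x : ℝ) :
    gaussianKL m₁ v₁ x v₂ = (log (v₂ / v₁) + v₁ / v₂ - 1) / 2 + (x - m₁) ^ 2 / (2 * v₂) := by
  unfold gaussianKL
  ring

lemma integrable_gaussianKL_gaussianReal :
    Integrable (fun x ↦ gaussianKL m₁ v₁ x v₂) (gaussianReal m v) := by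
  simp only [gaussianKL_eq_add_sub_sq]
  exact (integrable_const _).add ((integrable_sub_const_sq_gaussianReal m m₁ v).div_const _)

lemma integral_gaussianKL_gaussianReal :
    ∫ x, gaussianKL m₁ v₁ x v₂ ∂gaussianReal m v =
      gaussianKL m₁ v₁ m v₂ + v / (2 * v₂) := by
  simp only [gaussianKL_eq_add_sub_sq]
  rw [integral_add (integrable_const _)
    ((integrable_sub_const_sq_gaussianReal m m₁ v).div_const _), integral_const, probReal_univ,
    one_smul, integral_div, integral_sub_const_sq_gaussianReal]
  ring

end GaussianKL

section Gamma

lemma hasDerivAt_log_Gamma {x : ℝ} (hx : 0 < x) :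
    HasDerivAt (fun y ↦ log (Real.Gamma y)) (digamma x) x := by
  have hΓ : DifferentiableAt ℝ Real.Gamma x :=
    differentiableAt_Gamma fun n ↦ by linarith [n.cast_nonneg (α := ℝ)]
  exact (hΓ.log (Gamma_pos_of_pos hx).ne').hasDerivAt

lemma measurable_gammaPDF (a r : ℝ) : Measurable (gammaPDF a r) :=
  (measurable_gammaPDFReal a r).ennreal_ofReal

lemma ae_gammaMeasure_pos (a r : ℝ) : ∀ᵐ x ∂gammaMeasure a r, 0 < x := by
  rw [gammaMeasure, ae_withDensity_iff (measurable_gammaPDF a r)]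
  filter_upwards [Measure.ae_ne volume (0 : ℝ)] with x hx hpdf
  by_contra! hneg
  exact hpdf (gammaPDF_of_neg (hneg.lt_of_ne hx))

variable {a r t : ℝ}

lemma rpow_mul_gammaPDFReal (ha : 0 < a) (hr : 0 < r) (hat : 0 < a + t) {x : ℝ} (hx : 0 < x) :
    gammaPDFReal a r x * x ^ t =
      Real.Gamma (a + t) / (Real.Gamma a * r ^ t) * gammaPDFReal (a + t) r x := by
  have := Gamma_pos_of_pos ha
  have := Gamma_pos_of_pos hat
  rw [gammaPDFReal, gammaPDFReal, if_pos hx.le, if_pos hx.le, add_sub_right_comm,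
    rpow_add hx, rpow_add hr]
  field_simp

lemma lintegral_rpow_gammaMeasure (ha : 0 < a) (hr : 0 < r) (hat : 0 < a + t) :
    ∫⁻ x, ENNReal.ofReal (x ^ t) ∂gammaMeasure a r =
      ENNReal.ofReal (Real.Gamma (a + t) / (Real.Gamma a * r ^ t)) := by
  have hC : 0 ≤ Real.Gamma (a + t) / (Real.Gamma a * r ^ t) := by
    have := Gamma_pos_of_pos ha
    have := Gamma_pos_of_pos hat
    positivity
  calc ∫⁻ x, ENNReal.ofReal (x ^ t) ∂gammaMeasure a r
      = ∫⁻ x, gammaPDF a r x * ENNReal.ofReal (x ^ t) :=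
        lintegral_withDensity_eq_lintegral_mul _ (measurable_gammaPDF a r) (by fun_prop)
    _ = ∫⁻ x, ENNReal.ofReal (Real.Gamma (a + t) / (Real.Gamma a * r ^ t)) *
          gammaPDF (a + t) r x := by
        refine lintegral_congr_ae ?_
        filter_upwards [Measure.ae_ne volume (0 : ℝ)] with x hx
        rcases hx.lt_or_gt with hneg | hpos
        · simp only [gammaPDF_of_neg hneg, zero_mul, mul_zero]
        · rw [gammaPDF, gammaPDF, ← ENNReal.ofReal_mul (gammaPDFReal_nonneg ha hr x),
            ← ENNReal.ofReal_mul hC, rpow_mul_gammaPDFReal ha hr hat hpos]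
    _ = ENNReal.ofReal (Real.Gamma (a + t) / (Real.Gamma a * r ^ t)) := by
        rw [lintegral_const_mul _ (measurable_gammaPDF _ r), lintegral_gammaPDF_eq_one hat hr,
          mul_one]

lemma ae_gammaMeasure_rpow_nonneg (a r t : ℝ) : 0 ≤ᵐ[gammaMeasure a r] fun x ↦ x ^ t := by
  filter_upwards [ae_gammaMeasure_pos a r] with x hx using rpow_nonneg hx.le t

lemma integrable_rpow_gammaMeasure (ha : 0 < a) (hr : 0 < r) (hat : 0 < a + t) :
    Integrable (fun x ↦ x ^ t) (gammaMeasure a r) := by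
  rw [← lintegral_ofReal_ne_top_iff_integrable (by fun_prop) (ae_gammaMeasure_rpow_nonneg a r t),
    lintegral_rpow_gammaMeasure ha hr hat]
  exact ENNReal.ofReal_ne_top

lemma integral_rpow_gammaMeasure (ha : 0 < a) (hr : 0 < r) (hat : 0 < a + t) :
    ∫ x, x ^ t ∂gammaMeasure a r = Real.Gamma (a + t) / (Real.Gamma a * r ^ t) := by
  have := Gamma_pos_of_pos ha
  have := Gamma_pos_of_pos hat
  rw [integral_eq_lintegral_of_nonneg_ae (ae_gammaMeasure_rpow_nonneg a r t) (by fun_prop),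
    lintegral_rpow_gammaMeasure ha hr hat, ENNReal.toReal_ofReal (by positivity)]

lemma integrable_id_gammaMeasure (ha : 0 < a) (hr : 0 < r) :
    Integrable (fun x ↦ x) (gammaMeasure a r) := by
  simpa only [rpow_one] using integrable_rpow_gammaMeasure ha hr (add_pos ha one_pos)

lemma integral_id_gammaMeasure (ha : 0 < a) (hr : 0 < r) :
    ∫ x, x ∂gammaMeasure a r = a / r := by
  have hmoment := integral_rpow_gammaMeasure ha hr (add_pos ha one_pos)
  simp only [rpow_one, Gamma_add_one ha.ne'] at hmoment
  rw [hmoment]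
  have := Gamma_pos_of_pos ha
  field_simp

lemma exp_mul_log_ae_eq_rpow (a r t : ℝ) :
    (fun x ↦ rexp (t * log x)) =ᵐ[gammaMeasure a r] fun x ↦ x ^ t := by
  filter_upwards [ae_gammaMeasure_pos a r] with x hx
  rw [rpow_def_of_pos hx, mul_comm]

lemma zero_mem_interior_integrableExpSet_log_gammaMeasure (ha : 0 < a) (hr : 0 < r) :
    0 ∈ interior (integrableExpSet log (gammaMeasure a r)) := by
  refine mem_interior.2 ⟨Set.Ioi (-a), fun t ht ↦ ?_, isOpen_Ioi, neg_lt_zero.2 ha⟩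
  exact (integrable_congr (exp_mul_log_ae_eq_rpow a r t)).2
    (integrable_rpow_gammaMeasure ha hr (neg_lt_iff_pos_add'.1 ht))

lemma cgf_log_gammaMeasure (ha : 0 < a) (hr : 0 < r) (hat : 0 < a + t) :
    cgf log (gammaMeasure a r) t =
      log (Real.Gamma (a + t)) - log (Real.Gamma a) - t * log r := by
  have := Gamma_pos_of_pos ha
  have := Gamma_pos_of_pos hat
  rw [cgf, mgf, integral_congr_ae (exp_mul_log_ae_eq_rpow a r t),
    integral_rpow_gammaMeasure ha hr hat, log_div (by positivity) (by positivity),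
    log_mul (by positivity) (by positivity), log_rpow hr, sub_sub]

lemma integrable_log_gammaMeasure (ha : 0 < a) (hr : 0 < r) :
    Integrable log (gammaMeasure a r) :=
  integrable_of_mem_interior_integrableExpSet
    (zero_mem_interior_integrableExpSet_log_gammaMeasure ha hr)

theorem integral_log_gammaMeasure (ha : 0 < a) (hr : 0 < r) :
    ∫ x, log x ∂gammaMeasure a r = digamma a - log r := by
  have := isProbabilityMeasure_gammaMeasure ha hr
  have hcgf : cgf log (gammaMeasure a r) =ᶠ[nhds 0]
      fun t ↦ log (Real.Gamma (a + t)) - log (Real.Gamma a) - t * log r := by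
    filter_upwards [Ioi_mem_nhds (neg_lt_zero.2 ha)] with t ht
    exact cgf_log_gammaMeasure ha hr (neg_lt_iff_pos_add'.1 ht)
  have hΓ : HasDerivAt (fun t ↦ log (Real.Gamma (a + t))) (digamma a) 0 :=
    HasDerivAt.comp_const_add a 0 (by simpa only [add_zero] using hasDerivAt_log_Gamma ha)
  have hderiv := (hΓ.sub_const (log (Real.Gamma a))).sub ((hasDerivAt_id 0).mul_const (log r))
  have hmean := deriv_cgf_zero (zero_mem_interior_integrableExpSet_log_gammaMeasure ha hr)
  rw [probReal_univ, div_one] at hmean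
  rw [← hmean, (hderiv.congr_of_eventuallyEq hcgf).deriv, one_mul]

end Gamma

section GammaAverage

variable {v₁ α β : ℝ}

lemma gaussianKL_inv (m₁ m₂ : ℝ) (hv₁ : v₁ ≠ 0) {l : ℝ} (hl : l ≠ 0) :
    gaussianKL m₁ v₁ m₂ l⁻¹ = ((v₁ + (m₁ - m₂) ^ 2) * l - log l - (log v₁ + 1)) / 2 := by
  rw [gaussianKL, log_div (inv_ne_zero hl) hv₁, log_inv, div_inv_eq_mul]
  ring

lemma gaussianKL_inv_ae_eq (m₁ m₂ : ℝ) (hv₁ : v₁ ≠ 0) (α β : ℝ) :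
    (fun l ↦ gaussianKL m₁ v₁ m₂ l⁻¹) =ᵐ[gammaMeasure α β]
      fun l ↦ ((v₁ + (m₁ - m₂) ^ 2) * l - log l - (log v₁ + 1)) / 2 := by
  filter_upwards [ae_gammaMeasure_pos α β] with l hl using gaussianKL_inv m₁ m₂ hv₁ hl.ne'

lemma integrable_gaussianKL_inv_gammaMeasure (m₁ m₂ : ℝ) (hv₁ : v₁ ≠ 0) (hα : 0 < α)
    (hβ : 0 < β) : Integrable (fun l ↦ gaussianKL m₁ v₁ m₂ l⁻¹) (gammaMeasure α β) := by
  have := isProbabilityMeasure_gammaMeasure hα hβ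
  refine (integrable_congr (gaussianKL_inv_ae_eq m₁ m₂ hv₁ α β)).2 (Integrable.div_const ?_ 2)
  exact (((integrable_id_gammaMeasure hα hβ).const_mul _).sub
    (integrable_log_gammaMeasure hα hβ)).sub (integrable_const _)

lemma integral_gaussianKL_inv_gammaMeasure (m₁ m₂ : ℝ) (hv₁ : v₁ ≠ 0) (hα : 0 < α)
    (hβ : 0 < β) :
    ∫ l, gaussianKL m₁ v₁ m₂ l⁻¹ ∂gammaMeasure α β =
      ((v₁ + (m₁ - m₂) ^ 2) * (α / β) - (digamma α - log β) - (log v₁ + 1)) / 2 := by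
  have := isProbabilityMeasure_gammaMeasure hα hβ
  have hlin := (integrable_id_gammaMeasure hα hβ).const_mul (v₁ + (m₁ - m₂) ^ 2)
  have hlog := integrable_log_gammaMeasure hα hβ
  have hdiff : Integrable (fun l ↦ (v₁ + (m₁ - m₂) ^ 2) * l - log l) (gammaMeasure α β) :=
    hlin.sub hlog
  rw [integral_congr_ae (gaussianKL_inv_ae_eq m₁ m₂ hv₁ α β), integral_div,
    integral_sub hdiff (integrable_const _), integral_sub hlin hlog,
    integral_const_mul, integral_id_gammaMeasure hα hβ, integral_log_gammaMeasure hα hβ,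
    integral_const, probReal_univ, one_smul]

end GammaAverage

section NormalGamma

variable (m : ℝ) {κ : ℝ} (α β : ℝ)

lemma ofReal_normalGammaPDFReal (κ : ℝ) (p : ℝ × ℝ) :
    ENNReal.ofReal (normalGammaPDFReal m κ α β p) =
      gaussianPDF m (κ * p.2)⁻¹.toNNReal p.1 * gammaPDF α β p.2 :=
  ENNReal.ofReal_mul (gaussianPDFReal_nonneg _ _ _)

lemma measurable_normalGammaPDFReal (κ : ℝ) : Measurable (normalGammaPDFReal m κ α β) := by
  unfold normalGammaPDFReal gaussianPDFReal
  fun_prop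

theorem lintegral_normalGamma (hκ : 0 < κ) {f : ℝ × ℝ → ℝ≥0∞} (hf : Measurable f) :
    ∫⁻ p, f p ∂normalGamma m κ α β =
      ∫⁻ l, ∫⁻ x, f (x, l) ∂gaussianReal m (κ * l)⁻¹.toNNReal ∂gammaMeasure α β := by
  have hpdf := (measurable_normalGammaPDFReal m α β κ).ennreal_ofReal
  have hinner {l : ℝ} (hl : 0 < l) :
      ∫⁻ x, ENNReal.ofReal (normalGammaPDFReal m κ α β (x, l)) * f (x, l) =
        gammaPDF α β l * ∫⁻ x, f (x, l) ∂gaussianReal m (κ * l)⁻¹.toNNReal := by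
    have hv : (κ * l)⁻¹.toNNReal ≠ 0 := (toNNReal_pos.2 (by positivity)).ne'
    have hfl : Measurable fun x ↦ f (x, l) := by fun_prop
    have hg := measurable_gaussianPDF m (κ * l)⁻¹.toNNReal
    rw [gaussianReal_of_var_ne_zero m hv, lintegral_withDensity_eq_lintegral_mul _ hg hfl,
      ← lintegral_const_mul _ (hg.mul hfl)]
    refine lintegral_congr fun x ↦ ?_
    rw [ofReal_normalGammaPDFReal, mul_right_comm, mul_comm, Pi.mul_apply]
  rw [normalGamma, lintegral_withDensity_eq_lintegral_mul _ hpdf hf, Measure.volume_eq_prod,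
    lintegral_prod_symm' _ (hpdf.mul hf), gammaMeasure,
    lintegral_withDensity_eq_lintegral_mul_non_measurable _ (measurable_gammaPDF α β)
      (ae_of_all _ fun _ ↦ ENNReal.ofReal_lt_top)]
  refine lintegral_congr_ae ?_
  filter_upwards [Measure.ae_ne volume (0 : ℝ)] with l hl
  rcases hl.lt_or_gt with hneg | hpos
  · simp only [Pi.mul_apply, ofReal_normalGammaPDFReal, gammaPDF_of_neg hneg, mul_zero, zero_mul,
      lintegral_zero]
  · exact hinner hpos

lemma ae_normalGamma_snd_pos (κ : ℝ) : ∀ᵐ p ∂normalGamma m κ α β, 0 < p.2 := by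
  rw [normalGamma, ae_withDensity_iff (measurable_normalGammaPDFReal m α β κ).ennreal_ofReal]
  refine ae_of_all _ fun p hp ↦ ?_
  by_contra! hle
  rw [ofReal_normalGammaPDFReal] at hp
  rcases hle.lt_or_eq with hneg | hzero
  · exact hp (by rw [gammaPDF_of_neg hneg, mul_zero])
  · exact hp (by simp [hzero])

lemma lintegral_gaussianKL_gaussianReal (m₁ : ℝ) {v₁ l : ℝ} (hv₁ : 0 < v₁) (hκ : 0 < κ)
    (hl : 0 < l) :
    ∫⁻ x, ENNReal.ofReal (gaussianKL m₁ v₁ x l⁻¹) ∂gaussianReal m (κ * l)⁻¹.toNNReal =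
      ENNReal.ofReal (gaussianKL m₁ v₁ m l⁻¹ + 1 / (2 * κ)) := by
  rw [← ofReal_integral_eq_lintegral_ofReal (integrable_gaussianKL_gaussianReal m₁ v₁ m _ _)
      (ae_of_all _ fun x ↦ gaussianKL_nonneg m₁ x hv₁ (inv_pos.2 hl)),
    integral_gaussianKL_gaussianReal, coe_toNNReal _ (by positivity)]
  congr 2
  field_simp

lemma lintegral_gaussianKL_normalGamma (m₁ : ℝ) {v₁ : ℝ} (hv₁ : 0 < v₁) (hκ : 0 < κ) :
    ∫⁻ p, ENNReal.ofReal (gaussianKL m₁ v₁ p.1 p.2⁻¹) ∂normalGamma m κ α β =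
      ∫⁻ l, ENNReal.ofReal (gaussianKL m₁ v₁ m l⁻¹ + 1 / (2 * κ)) ∂gammaMeasure α β := by
  have hmeas : Measurable fun p : ℝ × ℝ ↦ gaussianKL m₁ v₁ p.1 p.2⁻¹ :=
    (measurable_gaussianKL m₁ v₁).comp (measurable_fst.prodMk measurable_snd.inv)
  rw [lintegral_normalGamma m α β hκ hmeas.ennreal_ofReal]
  refine lintegral_congr_ae ?_
  filter_upwards [ae_gammaMeasure_pos α β] with l hl
  exact lintegral_gaussianKL_gaussianReal m m₁ hv₁ hκ hl

lemma lintegral_klDiv_gaussianReal_normalGamma (m₁ κ : ℝ) {v₁ : ℝ} (hv₁ : 0 < v₁) :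
    ∫⁻ p, klDiv (gaussianReal m₁ v₁.toNNReal) (gaussianReal p.1 (1 / p.2).toNNReal)
        ∂normalGamma m κ α β =
      ∫⁻ p, ENNReal.ofReal (gaussianKL m₁ v₁ p.1 p.2⁻¹) ∂normalGamma m κ α β := by
  refine lintegral_congr_ae ?_
  filter_upwards [ae_normalGamma_snd_pos m α β κ] with p hp
  have hp' : 0 < 1 / p.2 := one_div_pos.2 hp
  rw [klDiv_gaussianReal _ _ (toNNReal_pos.2 hv₁).ne' (toNNReal_pos.2 hp').ne',
    coe_toNNReal _ hv₁.le, coe_toNNReal _ hp'.le, one_div]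

end NormalGamma

theorem normalGamma_posterior_averaged_klDiv_wellspecified
    (μstar μₙ lamstar κₙ αₙ βₙ : ℝ) (hlam : 0 < lamstar)
    (hκ : 0 < κₙ) (hα : 0 < αₙ) (hβ : 0 < βₙ) :
    ((∫⁻ pr, klDiv (gaussianReal μstar (Real.toNNReal (1 / lamstar)))
          (gaussianReal pr.1 (Real.toNNReal (1 / pr.2)))
        ∂(normalGamma μₙ κₙ αₙ βₙ) : ℝ≥0∞) : EReal)
      = (((1 / 2) * (Real.log (lamstar * βₙ) - digamma αₙ
          + (αₙ / βₙ) * (1 / lamstar + (μstar - μₙ) ^ 2) - 1 + 1 / κₙ) : ℝ) : EReal) := by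
  have := isProbabilityMeasure_gammaMeasure hα hβ
  have hv : 0 < 1 / lamstar := one_div_pos.2 hlam
  have hKL := integrable_gaussianKL_inv_gammaMeasure μstar μₙ hv.ne' hα hβ
  have hnonneg : 0 ≤ᵐ[gammaMeasure αₙ βₙ]
      fun l ↦ gaussianKL μstar (1 / lamstar) μₙ l⁻¹ + 1 / (2 * κₙ) := by
    filter_upwards [ae_gammaMeasure_pos αₙ βₙ] with l hl
    exact add_nonneg (gaussianKL_nonneg μstar μₙ hv (inv_pos.2 hl)) (by positivity)
  calc
    _ = ((∫⁻ l, ENNReal.ofReal (gaussianKL μstar (1 / lamstar) μₙ l⁻¹ + 1 / (2 * κₙ))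
          ∂gammaMeasure αₙ βₙ : ℝ≥0∞) : EReal) := by
      rw [lintegral_klDiv_gaussianReal_normalGamma μₙ αₙ βₙ μstar κₙ hv,
        lintegral_gaussianKL_normalGamma μₙ αₙ βₙ μstar hv hκ]
    _ = ((∫ l, (gaussianKL μstar (1 / lamstar) μₙ l⁻¹ + 1 / (2 * κₙ))
          ∂gammaMeasure αₙ βₙ : ℝ) : EReal) :=
      coe_lintegral_ofReal_eq_coe_integral (hKL.add (integrable_const _)) hnonneg
    _ = _ := by
      rw [integral_add hKL (integrable_const _), integral_const, probReal_univ, one_smul,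
        integral_gaussianKL_inv_gammaMeasure μstar μₙ hv.ne' hα hβ, log_mul hlam.ne' hβ.ne',
        one_div lamstar, log_inv]
      congr 1
      ring
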